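/- Let M_β(x,y) = (1 + ‖x−y‖²)^{−β} be the inverse multiquadric kernel on ℝ^d with parameter β > 0, and let ℰ_σ(x,y) = exp(−‖x−y‖/σ) be the ℓ²-norm exponential kernel with parameter σ > 0, where ‖·‖ is the Euclidean norm. For every d ∈ ℕ and σ, β > 0: (a) there is no λ ≥ 0 for which λM_β − ℰ_σ is a positive semidefinite kernel on ℝ^d; (b) there exists λ ≥ 0 for which λℰ_σ − M_β is a positive semidefinite kernel on ℝ^d if and only if β > d/2. -/

import Mathlib

open scoped ComplexOrder

/-- A function `K : X × X → ℂ` is a positive semidefinite kernel if every finite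
quadratic form `∑ j, ∑ k, c j * conj (c k) * K (x j) (x k)` is a nonnegative real number. -/
def IsPSDKernel {X : Type*} (K : X → X → ℂ) : Prop :=
  ∀ (n : ℕ) (x : Fin n → X) (c : Fin n → ℂ),
    0 ≤ ∑ j, ∑ k, c j * (starRingEnd ℂ) (c k) * K (x j) (x k)

/-- The inverse multiquadric kernel `M_β(x,y) = (1 + ‖x−y‖²)^{−β}` on `ℝ^d`. -/
noncomputable def invMultiquadricK (d : ℕ) (β : ℝ) (x y : EuclideanSpace ℝ (Fin d)) : ℂ :=
  (((1 + ‖x - y‖ ^ 2) ^ (-β) : ℝ) : ℂ)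

/-- The `ℓ²`-norm exponential kernel `ℰ_σ(x,y) = exp(−‖x−y‖/σ)` on `ℝ^d`. -/
noncomputable def l2expK (d : ℕ) (σ : ℝ) (x y : EuclideanSpace ℝ (Fin d)) : ℂ :=
  ((Real.exp (-‖x - y‖ / σ) : ℝ) : ℂ)

/-! Both kernels are Gaussian mixtures `∫ w(u) G_u du`, `u > 0`, where `G_u = exp (-u ‖x - y‖²)`:
the weight is `u ^ (-3/2) exp (-1 / (4σ²u))` for the exponential kernel and `u ^ (β-1) exp (-u)`
for the inverse multiquadric one. The Fourier transform shows `s ^ (d/2) G_s ≤ t ^ (d/2) G_t` in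
the order of positive semidefinite kernels when `s ≤ t`. So a mixture of the `G_u` with `u ≤ t` is
dominated by `G_t` as soon as `∫ u ^ (-d/2) w(u) du` converges at `0`, which for the weight
`u ^ (β-1) exp (-u)` means `β > d/2`; for large `u` the two weights can be compared pointwise.

Conversely, testing a domination on the all-ones vector over growing boxes of `ℤ ^ d` bounds
`∑ (1 + ‖m‖²) ^ (-β)` by a multiple of `∑ exp (-‖m‖ / σ) < ∞`, which forces `β > d/2`. The
exponential kernel is never dominated by the inverse multiquadric one because, as a function of
`‖x - y‖`, it has negative slope at `0` while the other has slope `0`. -/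

open MeasureTheory Set Filter Topology Real
open scoped InnerProductSpace Finset

namespace IsPSDKernel

variable {X : Type*} {K L : X → X → ℂ}

theorem comp {Y : Type*} (h : IsPSDKernel K) (f : Y → X) : IsPSDKernel fun x y => K (f x) (f y) :=
  fun n x c => h n (f ∘ x) c

theorem add (hK : IsPSDKernel K) (hL : IsPSDKernel L) :
    IsPSDKernel fun x y => K x y + L x y := fun n x c => by
  simpa only [mul_add, Finset.sum_add_distrib] using add_nonneg (hK n x c) (hL n x c)

theorem const_mul {a : ℝ} (ha : 0 ≤ a) (h : IsPSDKernel K) :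
    IsPSDKernel fun x y => (a : ℂ) * K x y := fun n x c => by
  simpa only [Finset.mul_sum, mul_left_comm] using
    mul_nonneg (Complex.zero_le_real.2 ha) (h n x c)

theorem mul_conj (f : X → ℂ) : IsPSDKernel fun x y => f x * (starRingEnd ℂ) (f y) :=
  fun n x c => by
    have hsq : ∑ j, ∑ k, c j * (starRingEnd ℂ) (c k) * (f (x j) * (starRingEnd ℂ) (f (x k))) =
        (∑ j, c j * f (x j)) * (starRingEnd ℂ) (∑ j, c j * f (x j)) := by
      simp only [map_sum, map_mul, Finset.sum_mul_sum, mul_mul_mul_comm]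
    rw [hsq, Complex.mul_conj]
    exact Complex.zero_le_real.2 (Complex.normSq_nonneg _)

theorem integral {α : Type*} [MeasurableSpace α] {μ : Measure α} {K : α → X → X → ℂ}
    (hK : ∀ᵐ a ∂μ, IsPSDKernel (K a)) (hint : ∀ x y, Integrable (fun a => K a x y) μ) :
    IsPSDKernel fun x y => ∫ a, K a x y ∂μ := fun n x c => by
  have hterm : ∀ j k, Integrable
      (fun a => c j * (starRingEnd ℂ) (c k) * K a (x j) (x k)) μ :=
    fun j k => (hint _ _).const_mul _
  have hswap : ∑ j, ∑ k, c j * (starRingEnd ℂ) (c k) * ∫ a, K a (x j) (x k) ∂μ =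
      ∫ a, ∑ j, ∑ k, c j * (starRingEnd ℂ) (c k) * K a (x j) (x k) ∂μ := by
    rw [integral_finsetSum _ fun j _ => integrable_finsetSum _ fun k _ => hterm j k]
    simp only [integral_finsetSum _ fun k _ => hterm _ k, integral_const_mul]
  rw [hswap]
  exact integral_nonneg_of_ae (hK.mono fun a ha => ha n x c)

theorem sum_nonneg (h : IsPSDKernel K) (s : Finset X) : 0 ≤ ∑ x ∈ s, ∑ y ∈ s, K x y := by
  have hreindex : ∀ f : X → ℂ, ∑ i, f (s.equivFin.symm i) = ∑ x ∈ s, f x := fun f =>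
    (s.equivFin.symm.sum_comp fun x : s => f x).trans (s.sum_coe_sort f)
  have := h #s (fun i => s.equivFin.symm i) 1
  simp only [Pi.one_apply, map_one, mul_one, one_mul] at this
  rwa [hreindex fun x => ∑ k, K x (s.equivFin.symm k),
    Finset.sum_congr rfl fun x _ => hreindex (K x)] at this

theorem add_swap_le (h : IsPSDKernel K) (x y : X) : K x y + K y x ≤ K x x + K y y := by
  have := h 2 ![x, y] ![1, -1]
  simp only [Fin.sum_univ_two, Matrix.cons_val_zero, Matrix.cons_val_one, map_one, map_neg] at this
  rw [← sub_nonneg]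
  convert this using 1
  ring

end IsPSDKernel

/-- `KernelDominated K G` is the inclusion `ℋ_K ⊆ ℋ_G` of reproducing kernel Hilbert spaces, in
the form given to it by Aronszajn's theorem: `λ G - K` is positive semidefinite for some `λ ≥ 0`. -/
def KernelDominated {X : Type*} (K G : X → X → ℂ) : Prop :=
  ∃ lam : ℝ, 0 ≤ lam ∧ IsPSDKernel fun x y => (lam : ℂ) * G x y - K x y

namespace KernelDominated

variable {X : Type*} {K L G : X → X → ℂ}

theorem of_isPSDKernel_sub {a b : ℝ} (ha : 0 < a) (hb : 0 ≤ b)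
    (h : IsPSDKernel fun x y => (b : ℂ) * G x y - (a : ℂ) * K x y) : KernelDominated K G := by
  refine ⟨b / a, by positivity, ?_⟩
  convert h.const_mul (inv_nonneg.2 ha.le) using 3 with x y
  have : (a : ℂ) ≠ 0 := by exact_mod_cast ha.ne'
  push_cast
  field_simp

theorem trans (hKL : KernelDominated K L) (hLG : KernelDominated L G) : KernelDominated K G := by
  obtain ⟨a, ha, hKL⟩ := hKL
  obtain ⟨b, hb, hLG⟩ := hLG
  refine ⟨a * b, by positivity, ?_⟩
  convert (hLG.const_mul ha).add hKL using 3 with x y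
  push_cast
  ring

theorem add (hK : KernelDominated K G) (hL : KernelDominated L G) :
    KernelDominated (fun x y => K x y + L x y) G := by
  obtain ⟨a, ha, hK⟩ := hK
  obtain ⟨b, hb, hL⟩ := hL
  refine ⟨a + b, by positivity, ?_⟩
  convert hK.add hL using 3 with x y
  push_cast
  ring

theorem of_const_mul {a b : ℝ} (ha : 0 < a) (hb : 0 ≤ b)
    (h : KernelDominated (fun x y => (a : ℂ) * K x y) fun x y => (b : ℂ) * G x y) :
    KernelDominated K G := by
  obtain ⟨c, hc, h⟩ := h
  refine of_isPSDKernel_sub ha (mul_nonneg hc hb) ?_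
  convert h using 3 with x y
  push_cast
  ring

end KernelDominated

theorem IsPSDKernel.hasDerivWithinAt_radial_nonpos {E : Type*} [NormedAddCommGroup E]
    [NormedSpace ℝ E] [Nontrivial E] {φ : ℝ → ℝ} {φ' : ℝ}
    (h : IsPSDKernel fun x y : E => (φ ‖x - y‖ : ℂ)) (hφ : HasDerivWithinAt φ φ' (Ici 0) 0) :
    φ' ≤ 0 := by
  have hmax : ∀ r ∈ Ioi (0 : ℝ), φ r ≤ φ 0 := fun r hr => by
    obtain ⟨v, rfl⟩ := exists_norm_eq E (le_of_lt hr)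
    have := h.add_swap_le v 0
    simp only [sub_zero, zero_sub, norm_neg, sub_self, norm_zero] at this
    norm_cast at this
    linarith
  have hslope := hasDerivWithinAt_iff_tendsto_slope.1 hφ
  rw [Ici_sdiff_left] at hslope
  refine le_of_tendsto hslope ?_
  filter_upwards [self_mem_nhdsWithin] with r hr
  rw [slope_def_field, sub_zero]
  exact div_nonpos_of_nonpos_of_nonneg (sub_nonpos.2 (hmax r hr)) (le_of_lt hr)

theorem not_kernelDominated_exp_invMultiquadric {E : Type*} [NormedAddCommGroup E]
    [NormedSpace ℝ E] [Nontrivial E] {σ : ℝ} (hσ : 0 < σ) (β : ℝ) :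
    ¬ KernelDominated (fun x y : E => ((Real.exp (-‖x - y‖ / σ) : ℝ) : ℂ))
      fun x y => (((1 + ‖x - y‖ ^ 2) ^ (-β) : ℝ) : ℂ) := by
  rintro ⟨lam, -, h⟩
  have hM : HasDerivAt (fun r : ℝ => (1 + r ^ 2) ^ (-β)) 0 0 := by
    have := ((hasDerivAt_pow 2 (0 : ℝ)).const_add 1).rpow_const (p := -β) (Or.inl (by norm_num))
    simpa using this
  have hE : HasDerivAt (fun r : ℝ => Real.exp (-r / σ)) (-σ⁻¹) 0 := by
    simpa [neg_div] using ((hasDerivAt_id (0 : ℝ)).neg.div_const σ).exp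
  have hd := ((hM.const_mul lam).sub hE).hasDerivWithinAt (s := Ici 0)
  have hle := IsPSDKernel.hasDerivWithinAt_radial_nonpos (E := E) (by simpa using h) hd
  have : 0 < σ⁻¹ := by positivity
  linarith

section Mixture

variable {E : Type*} [NormedAddCommGroup E] {m w : ℝ → ℝ} {S T : Set ℝ}

/-- The Gaussian kernel `exp (-u ‖x - y‖²)`, of scale `1 / √u`. -/
noncomputable def gaussianK (u : ℝ) (x y : E) : ℂ := (Real.exp (-u * ‖x - y‖ ^ 2) : ℂ)

/-- The mixture `∫ u ∈ S, w u * exp (-u ‖x - y‖²)` of Gaussian kernels with weight `w`. -/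
noncomputable def gaussianMixtureK (w : ℝ → ℝ) (S : Set ℝ) (x y : E) : ℂ :=
  ∫ u in S, (w u : ℂ) * gaussianK u x y

theorem integrableOn_mul_gaussianK (hS : MeasurableSet S) (hS0 : S ⊆ Ioi 0)
    (hw : IntegrableOn w S) (x y : E) :
    IntegrableOn (fun u => (w u : ℂ) * gaussianK u x y) S := by
  refine hw.ofReal.mul_bdd (c := 1) (by unfold gaussianK; fun_prop)
    ((ae_restrict_iff' hS).2 <| ae_of_all _ fun u hu => ?_)
  rw [gaussianK, Complex.norm_real, Real.norm_of_nonneg (Real.exp_pos _).le, Real.exp_le_one_iff,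
    neg_mul]
  exact neg_nonpos.2 (mul_nonneg (hS0 hu).le (sq_nonneg _))

theorem gaussianMixtureK_const_mul_sub (hS : MeasurableSet S) (hS0 : S ⊆ Ioi 0)
    (hm : IntegrableOn m S) (hw : IntegrableOn w S) (C : ℝ) (x y : E) :
    gaussianMixtureK (fun u => C * w u - m u) S x y =
      (C : ℂ) * gaussianMixtureK w S x y - gaussianMixtureK m S x y := by
  simp only [gaussianMixtureK, Complex.ofReal_sub, Complex.ofReal_mul, sub_mul, mul_assoc]
  rw [integral_sub ((integrableOn_mul_gaussianK hS hS0 hw x y).const_mul _)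
    (integrableOn_mul_gaussianK hS hS0 hm x y), integral_const_mul]

theorem gaussianMixtureK_union (hST : Disjoint S T) (hS : MeasurableSet S) (hT : MeasurableSet T)
    (hST0 : S ∪ T ⊆ Ioi 0) (hw : IntegrableOn w (S ∪ T)) (x y : E) :
    gaussianMixtureK w (S ∪ T) x y = gaussianMixtureK w S x y + gaussianMixtureK w T x y := by
  obtain ⟨hS0, hT0⟩ := union_subset_iff.1 hST0
  exact setIntegral_union hST hT (integrableOn_mul_gaussianK hS hS0 hw.left_of_union x y)
    (integrableOn_mul_gaussianK hT hT0 hw.right_of_union x y)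

theorem rpow_neg_mul_gaussianK_sub {u : ℝ} (hu : 0 < u) (c D a t : ℝ) (x y : E) :
    ((u ^ (-D) * c : ℝ) : ℂ) * ((a : ℂ) * gaussianK t x y - ((u ^ D : ℝ) : ℂ) * gaussianK u x y) =
      ((a * (u ^ (-D) * c) : ℝ) : ℂ) * gaussianK t x y - (c : ℂ) * gaussianK u x y := by
  have hD : ((u ^ (-D) : ℝ) : ℂ) * ((u ^ D : ℝ) : ℂ) = 1 := by
    rw [← Complex.ofReal_mul, ← rpow_add hu, neg_add_cancel, rpow_zero, Complex.ofReal_one]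
  push_cast
  linear_combination -(c : ℂ) * gaussianK u x y * hD

theorem integrableOn_rpow_neg_mul_gaussianK_sub (hS : MeasurableSet S) (hS0 : S ⊆ Ioi 0)
    (hm : IntegrableOn m S) {D : ℝ} (hmD : IntegrableOn (fun u => u ^ (-D) * m u) S)
    (a t : ℝ) (x y : E) :
    IntegrableOn (fun u => ((u ^ (-D) * m u : ℝ) : ℂ) *
      ((a : ℂ) * gaussianK t x y - ((u ^ D : ℝ) : ℂ) * gaussianK u x y)) S :=
  IntegrableOn.congr_fun
    (((hmD.const_mul a).ofReal.mul_const _).sub (integrableOn_mul_gaussianK hS hS0 hm x y))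
    (fun _ hu => (rpow_neg_mul_gaussianK_sub (hS0 hu) _ D a t x y).symm) hS

theorem setIntegral_rpow_neg_mul_gaussianK_sub (hS : MeasurableSet S) (hS0 : S ⊆ Ioi 0)
    (hm : IntegrableOn m S) {D : ℝ} (hmD : IntegrableOn (fun u => u ^ (-D) * m u) S)
    (a t : ℝ) (x y : E) :
    ∫ u in S, ((u ^ (-D) * m u : ℝ) : ℂ) *
      ((a : ℂ) * gaussianK t x y - ((u ^ D : ℝ) : ℂ) * gaussianK u x y) =
      ((a * ∫ u in S, u ^ (-D) * m u : ℝ) : ℂ) * gaussianK t x y - gaussianMixtureK m S x y := by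
  have hconst : IntegrableOn
      (fun u => ((a * (u ^ (-D) * m u) : ℝ) : ℂ) * gaussianK t x y) S :=
    (hmD.const_mul a).ofReal.mul_const _
  rw [setIntegral_congr_fun hS fun u hu => rpow_neg_mul_gaussianK_sub (hS0 hu) (m u) D a t x y,
    integral_sub hconst (integrableOn_mul_gaussianK hS hS0 hm x y),
    integral_mul_const, integral_complex_ofReal, integral_const_mul, gaussianMixtureK]

end Mixture

section Gaussian

variable {E : Type*} [NormedAddCommGroup E] [InnerProductSpace ℝ E] [FiniteDimensional ℝ E]

theorem integrable_mul_cexp_inner [MeasurableSpace E] [BorelSpace E] {μ : Measure E}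
    {w : E → ℝ} (hw : Integrable w μ) (z : E) :
    Integrable (fun v => (w v : ℂ) * Complex.exp (Complex.I * ⟪z, v⟫_ℝ)) μ :=
  hw.ofReal.mul_bdd (c := 1) (by fun_prop) (ae_of_all _ fun v => by
    rw [mul_comm Complex.I, Complex.norm_exp_ofReal_mul_I])

theorem isPSDKernel_integral_cexp [MeasurableSpace E] [BorelSpace E] {μ : Measure E}
    {w : E → ℝ} (hw : 0 ≤ w) (hint : Integrable w μ) :
    IsPSDKernel fun x y => ∫ v, (w v : ℂ) * Complex.exp (Complex.I * ⟪x - y, v⟫_ℝ) ∂μ := by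
  refine IsPSDKernel.integral (ae_of_all _ fun v => ?_) fun x y =>
    integrable_mul_cexp_inner hint (x - y)
  convert (IsPSDKernel.mul_conj fun x : E => Complex.exp (Complex.I * ⟪x, v⟫_ℝ)).const_mul
    (hw v) using 4 with x y
  rw [← Complex.exp_conj, ← Complex.exp_add, map_mul, Complex.conj_I, Complex.conj_ofReal,
    inner_sub_left]
  push_cast
  ring_nf

theorem integral_exp_mul_cexp_eq_gaussianK [MeasurableSpace E] [BorelSpace E] {t : ℝ} (ht : 0 < t)
    (x y : E) :
    ∫ v : E, (Real.exp (-(1 / (4 * t)) * ‖v‖ ^ 2) : ℂ) * Complex.exp (Complex.I * ⟪x - y, v⟫_ℝ) =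
      ((4 * π * t) ^ (Module.finrank ℝ E / 2 : ℝ) : ℝ) * gaussianK t x y := by
  have hre : 0 < ((1 / (4 * t) : ℝ) : ℂ).re := by rw [Complex.ofReal_re]; positivity
  have hint := GaussianFourier.integral_cexp_neg_mul_sq_norm_add hre Complex.I (x - y)
  have htC : (t : ℂ) ≠ 0 := by exact_mod_cast ht.ne'
  have hexp : ∀ v : E, (Real.exp (-(1 / (4 * t)) * ‖v‖ ^ 2) : ℂ) *
      Complex.exp (Complex.I * ⟪x - y, v⟫_ℝ) =
      Complex.exp (-((1 / (4 * t) : ℝ) : ℂ) * ‖v‖ ^ 2 + Complex.I * ⟪x - y, v⟫_ℝ) := fun v => by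
    rw [Complex.exp_add]
    push_cast
    rfl
  simp only [hexp]
  rw [hint, gaussianK, Complex.ofReal_cpow (by positivity)]
  push_cast
  congr 2
  · field_simp
  · rw [Complex.I_sq]
    field_simp

theorem integrable_exp_neg_mul_sq_norm [MeasurableSpace E] [BorelSpace E] {b : ℝ} (hb : 0 < b) :
    Integrable fun v : E => Real.exp (-b * ‖v‖ ^ 2) := by
  have := (GaussianFourier.integrable_cexp_neg_mul_sq_norm_add (b := (b : ℂ)) (by simpa) 0
    (0 : E)).norm
  simpa [Complex.norm_exp, ← Complex.ofReal_pow] using this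

/-- On the Fourier side `(4πt)^(d/2) exp (-t ‖·‖²)` has density `exp (-‖v‖² / (4t))`, which
increases with `t`. -/
theorem isPSDKernel_rpow_mul_gaussianK_sub {s t : ℝ} (hs : 0 < s) (hst : s ≤ t) :
    IsPSDKernel fun x y : E => ((t ^ (Module.finrank ℝ E / 2 : ℝ) : ℝ) : ℂ) * gaussianK t x y -
      ((s ^ (Module.finrank ℝ E / 2 : ℝ) : ℝ) : ℂ) * gaussianK s x y := by
  borelize E
  have ht : 0 < t := hs.trans_le hst
  have hs_int := integrable_exp_neg_mul_sq_norm (E := E) (b := 1 / (4 * s)) (by positivity)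
  have ht_int := integrable_exp_neg_mul_sq_norm (E := E) (b := 1 / (4 * t)) (by positivity)
  have hdensity : (0 : E → ℝ) ≤ fun v =>
      Real.exp (-(1 / (4 * t)) * ‖v‖ ^ 2) - Real.exp (-(1 / (4 * s)) * ‖v‖ ^ 2) := fun v =>
    sub_nonneg.2 <| by gcongr
  convert (isPSDKernel_integral_cexp hdensity (ht_int.sub hs_int)).const_mul
    (a := ((4 * π) ^ (Module.finrank ℝ E / 2 : ℝ))⁻¹) (by positivity) using 3 with x y
  simp only [Complex.ofReal_sub, sub_mul]
  rw [integral_sub (integrable_mul_cexp_inner ht_int _) (integrable_mul_cexp_inner hs_int _),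
    integral_exp_mul_cexp_eq_gaussianK ht, integral_exp_mul_cexp_eq_gaussianK hs,
    Real.mul_rpow (by positivity) ht.le, Real.mul_rpow (by positivity) hs.le]
  have hπ : (((4 * π) ^ (Module.finrank ℝ E / 2 : ℝ) : ℝ) : ℂ) ≠ 0 := by
    exact_mod_cast (by positivity : (4 * π) ^ (Module.finrank ℝ E / 2 : ℝ) ≠ 0)
  simp only [Complex.ofReal_mul, Complex.ofReal_inv]
  field_simp

theorem isPSDKernel_gaussianK {t : ℝ} (ht : 0 < t) : IsPSDKernel (gaussianK (E := E) t) := by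
  borelize E
  have hint := integrable_exp_neg_mul_sq_norm (E := E) (b := 1 / (4 * t)) (by positivity)
  convert (isPSDKernel_integral_cexp (fun v : E => by positivity) hint).const_mul
    (a := ((4 * π * t) ^ (Module.finrank ℝ E / 2 : ℝ))⁻¹) (by positivity) with x y
  have hc : (((4 * π * t) ^ (Module.finrank ℝ E / 2 : ℝ) : ℝ) : ℂ) ≠ 0 := by
    exact_mod_cast (by positivity : (4 * π * t) ^ (Module.finrank ℝ E / 2 : ℝ) ≠ 0)
  rw [integral_exp_mul_cexp_eq_gaussianK ht, Complex.ofReal_inv, inv_mul_cancel_left₀ hc]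

variable {m w : ℝ → ℝ} {S T : Set ℝ}

theorem isPSDKernel_gaussianMixtureK (hS : MeasurableSet S) (hS0 : S ⊆ Ioi 0)
    (hw : IntegrableOn w S) (hw0 : ∀ u ∈ S, 0 ≤ w u) :
    IsPSDKernel (gaussianMixtureK (E := E) w S) :=
  IsPSDKernel.integral ((ae_restrict_iff' hS).2 <| ae_of_all _ fun u hu =>
    (isPSDKernel_gaussianK (hS0 hu)).const_mul (hw0 u hu))
    (integrableOn_mul_gaussianK hS hS0 hw)

theorem kernelDominated_gaussianMixtureK_of_subset (hS : MeasurableSet S) (hT : MeasurableSet T)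
    (hST : S ⊆ T) (hT0 : T ⊆ Ioi 0) (hw : IntegrableOn w T) (hw0 : ∀ u ∈ T, 0 ≤ w u) :
    KernelDominated (gaussianMixtureK (E := E) w S) (gaussianMixtureK w T) := by
  refine ⟨1, zero_le_one, ?_⟩
  convert isPSDKernel_gaussianMixtureK (E := E) (hT.diff hS) (sdiff_subset.trans hT0)
    (hw.mono_set sdiff_subset) fun u hu => hw0 u hu.1 with x y
  have := setIntegral_sdiff hS (integrableOn_mul_gaussianK hT hT0 hw x y) hST
  simpa [gaussianMixtureK] using this.symm

theorem kernelDominated_gaussianMixtureK_of_le_mul {C : ℝ} (hC : 0 ≤ C) (hS : MeasurableSet S)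
    (hS0 : S ⊆ Ioi 0) (hm : IntegrableOn m S) (hw : IntegrableOn w S)
    (hmw : ∀ u ∈ S, m u ≤ C * w u) :
    KernelDominated (gaussianMixtureK (E := E) m S) (gaussianMixtureK w S) := by
  refine ⟨C, hC, ?_⟩
  convert isPSDKernel_gaussianMixtureK (E := E) hS hS0 ((hw.const_mul C).sub hm)
    fun u hu => sub_nonneg.2 (hmw u hu) with x y
  exact (gaussianMixtureK_const_mul_sub hS hS0 hm hw C x y).symm

theorem kernelDominated_gaussianMixtureK_gaussianK {t : ℝ} (ht : 0 < t)
    (hm0 : ∀ u ∈ Ioc 0 t, 0 ≤ m u) (hm : IntegrableOn m (Ioc 0 t))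
    (hmD : IntegrableOn (fun u => u ^ (-(Module.finrank ℝ E / 2 : ℝ)) * m u) (Ioc 0 t)) :
    KernelDominated (gaussianMixtureK (E := E) m (Ioc 0 t)) (gaussianK t) := by
  set D : ℝ := Module.finrank ℝ E / 2
  have hweight : ∀ u ∈ Ioc 0 t, 0 ≤ u ^ (-D) * m u := fun u hu =>
    mul_nonneg (rpow_nonneg hu.1.le _) (hm0 u hu)
  refine ⟨t ^ D * ∫ u in Ioc 0 t, u ^ (-D) * m u,
    mul_nonneg (by positivity) (setIntegral_nonneg measurableSet_Ioc hweight), ?_⟩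
  simp only [← setIntegral_rpow_neg_mul_gaussianK_sub measurableSet_Ioc Ioc_subset_Ioi_self hm hmD]
  exact IsPSDKernel.integral ((ae_restrict_iff' measurableSet_Ioc).2 <| ae_of_all _ fun u hu =>
    (isPSDKernel_rpow_mul_gaussianK_sub hu.1 hu.2).const_mul (hweight u hu))
    (integrableOn_rpow_neg_mul_gaussianK_sub measurableSet_Ioc Ioc_subset_Ioi_self hm hmD _ t)

theorem kernelDominated_gaussianK_gaussianMixtureK {t : ℝ} (ht : 0 < t)
    (hw0 : ∀ u ∈ Ioi t, 0 < w u) (hw : IntegrableOn w (Ioi t)) :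
    KernelDominated (gaussianK (E := E) t) (gaussianMixtureK w (Ioi t)) := by
  set D : ℝ := Module.finrank ℝ E / 2
  have hsub : Ioi t ⊆ Ioi 0 := Ioi_subset_Ioi ht.le
  have hweight : ∀ u ∈ Ioi t, 0 < u ^ (-D) * w u := fun u hu =>
    mul_pos (rpow_pos_of_pos (hsub hu) _) (hw0 u hu)
  have hwD : IntegrableOn (fun u => u ^ (-D) * w u) (Ioi t) := by
    refine hw.bdd_mul (c := t ^ (-D)) (by fun_prop)
      ((ae_restrict_iff' measurableSet_Ioi).2 <| ae_of_all _ fun u hu => ?_)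
    rw [Real.norm_of_nonneg (rpow_nonneg (hsub hu).le _)]
    exact rpow_le_rpow_of_nonpos ht (le_of_lt hu) (neg_nonpos.2 (by positivity))
  have hpos : 0 < ∫ u in Ioi t, u ^ (-D) * w u := by
    refine (setIntegral_pos_iff_support_of_nonneg_ae
      ((ae_restrict_iff' measurableSet_Ioi).2 <| ae_of_all _ fun u hu => (hweight u hu).le)
      hwD).2 ?_
    have : Ioi t ⊆ Function.support (fun u => u ^ (-D) * w u) := fun u hu => (hweight u hu).ne'
    rw [inter_eq_right.2 this, Real.volume_Ioi]
    exact ENNReal.zero_lt_top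
  refine KernelDominated.of_isPSDKernel_sub (b := 1) (mul_pos (rpow_pos_of_pos ht D) hpos)
    zero_le_one ?_
  convert IsPSDKernel.integral (μ := volume.restrict (Ioi t))
    (K := fun u x y => -(((u ^ (-D) * w u : ℝ) : ℂ) * (((t ^ D : ℝ) : ℂ) * gaussianK t x y -
      ((u ^ D : ℝ) : ℂ) * gaussianK u x y)))
    ((ae_restrict_iff' measurableSet_Ioi).2 <| ae_of_all _ fun u hu => ?_) fun x y =>
      (integrableOn_rpow_neg_mul_gaussianK_sub measurableSet_Ioi hsub hw hwD _ t x y).neg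
    using 3 with x y
  · rw [integral_neg, setIntegral_rpow_neg_mul_gaussianK_sub measurableSet_Ioi hsub hw hwD,
      neg_sub, Complex.ofReal_one, one_mul]
  · simpa only [← mul_neg, neg_sub] using
      (isPSDKernel_rpow_mul_gaussianK_sub ht (le_of_lt hu)).const_mul (hweight u hu).le

/-- Small `u` are all dominated by the single Gaussian `G_t`, which the large `u` in turn dominate;
the cut `t` is where `m ≤ C * w` sets in. -/
theorem kernelDominated_gaussianMixtureK (hm : IntegrableOn m (Ioi 0)) (hw : IntegrableOn w (Ioi 0))
    (hm0 : ∀ u ∈ Ioi 0, 0 ≤ m u) (hw0 : ∀ u ∈ Ioi 0, 0 < w u)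
    (hmD : IntegrableOn (fun u => u ^ (-(Module.finrank ℝ E / 2 : ℝ)) * m u) (Ioi 0))
    (hmw : m =O[atTop] w) :
    KernelDominated (gaussianMixtureK (E := E) m (Ioi 0)) (gaussianMixtureK w (Ioi 0)) := by
  obtain ⟨C, hC, hmC⟩ := hmw.exists_nonneg
  obtain ⟨t, hle, ht⟩ :=
    ((eventually_forall_ge_atTop.2 hmC.bound).and (eventually_gt_atTop 0)).exists
  have hsub : Ioi t ⊆ Ioi 0 := Ioi_subset_Ioi ht.le
  have htail : KernelDominated (gaussianMixtureK (E := E) w (Ioi t)) (gaussianMixtureK w (Ioi 0)) :=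
    kernelDominated_gaussianMixtureK_of_subset measurableSet_Ioi measurableSet_Ioi hsub subset_rfl
      hw fun u hu => (hw0 u hu).le
  have hlow : KernelDominated (gaussianMixtureK (E := E) m (Ioc 0 t)) (gaussianK t) :=
    kernelDominated_gaussianMixtureK_gaussianK ht (fun u hu => hm0 u hu.1)
      (hm.mono_set Ioc_subset_Ioi_self) (hmD.mono_set Ioc_subset_Ioi_self)
  have hcut : KernelDominated (gaussianK (E := E) t) (gaussianMixtureK w (Ioi t)) :=
    kernelDominated_gaussianK_gaussianMixtureK ht (fun u hu => hw0 u (hsub hu)) (hw.mono_set hsub)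
  have hhigh : KernelDominated (gaussianMixtureK (E := E) m (Ioi t)) (gaussianMixtureK w (Ioi t)) :=
    kernelDominated_gaussianMixtureK_of_le_mul hC measurableSet_Ioi hsub (hm.mono_set hsub)
      (hw.mono_set hsub) fun u hu => by
        simpa only [Real.norm_of_nonneg (hw0 u (hsub hu)).le] using
          (le_abs_self _).trans (hle u (le_of_lt hu))
  convert ((hlow.trans hcut).add hhigh).trans htail using 1
  ext x y
  rw [← Ioc_union_Ioi_eq_Ioi ht.le] at hm ⊢
  exact gaussianMixtureK_union (Ioc_disjoint_Ioi le_rfl) measurableSet_Ioc measurableSet_Ioi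
    (Ioc_union_Ioi_eq_Ioi ht.le).subset hm x y

end Gaussian

section CauchySchlomilch

variable {F : Type*} [NormedAddCommGroup F] [NormedSpace ℝ F] {p q : ℝ}

theorem integral_inv_sq_smul_comp_div_Ioi {c : ℝ} (hc : 0 < c) (f : ℝ → F) :
    ∫ v in Ioi 0, (c / v ^ 2) • f (c / v) = ∫ v in Ioi 0, f v := by
  have hpos : MapsTo (fun v => c / v) (Ioi 0) (Ioi 0) := fun v hv => div_pos hc hv
  have hinv : ∀ v : ℝ, c / (c / v) = v := fun v => div_div_cancel₀ hc.ne'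
  have hbij : BijOn (fun v => c / v) (Ioi 0) (Ioi 0) :=
    InvOn.bijOn ⟨fun v _ => hinv v, fun v _ => hinv v⟩ hpos hpos
  have hderiv : ∀ v ∈ Ioi (0 : ℝ), HasDerivWithinAt (fun v => c / v) (-c / v ^ 2) (Ioi 0) v :=
    fun v hv => by
      simpa [div_eq_mul_inv] using
        ((hasDerivAt_inv (ne_of_gt hv)).const_mul c).hasDerivWithinAt
  have := integral_image_eq_integral_abs_deriv_smul measurableSet_Ioi hderiv hbij.injOn f
  simpa [hbij.image_eq, abs_div, abs_of_pos hc] using this.symm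

theorem hasDerivWithinAt_mul_sub_div {v : ℝ} (hv : v ≠ 0) (s : Set ℝ) :
    HasDerivWithinAt (fun v => p * v - q / v) (p + q / v ^ 2) s v := by
  have := ((hasDerivAt_id v).const_mul p).fun_sub ((hasDerivAt_inv hv).const_mul q)
  simpa [div_eq_mul_inv] using this.hasDerivWithinAt

theorem bijOn_mul_sub_div_Ioi (hp : 0 < p) (hq : 0 < q) :
    BijOn (fun v => p * v - q / v) (Ioi 0) univ := by
  refine ⟨mapsTo_univ _ _, StrictMonoOn.injOn fun v hv w _ hvw => ?_, fun y _ => ?_⟩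
  · have hv : 0 < v := hv
    gcongr
  · obtain ⟨s, hs, hys⟩ : ∃ s, s ^ 2 = y ^ 2 + 4 * p * q ∧ |y| < s :=
      ⟨√(y ^ 2 + 4 * p * q), Real.sq_sqrt (by positivity),
        Real.lt_sqrt_of_sq_lt (by rw [sq_abs]; nlinarith [mul_pos hp hq])⟩
    have hpos : 0 < y + s := by linarith [neg_abs_le y]
    refine ⟨(y + s) / (2 * p), div_pos hpos (by positivity), ?_⟩
    field_simp
    linear_combination hs

theorem integrableOn_deriv_smul_comp_mul_sub_div_Ioi (hp : 0 < p) (hq : 0 < q) {f : ℝ → F}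
    (hf : Integrable f) :
    IntegrableOn (fun v => (p + q / v ^ 2) • f (p * v - q / v)) (Ioi 0) := by
  have hbij := bijOn_mul_sub_div_Ioi hp hq
  have := (integrableOn_image_iff_integrableOn_abs_deriv_smul measurableSet_Ioi
    (fun v hv => hasDerivWithinAt_mul_sub_div (ne_of_gt hv) _) hbij.injOn f).1
    (by rwa [hbij.image_eq, integrableOn_univ])
  refine this.congr (ae_of_all _ fun v => ?_)
  beta_reduce
  rw [abs_of_nonneg (by positivity)]

theorem integrableOn_comp_mul_sub_div_Ioi (hp : 0 < p) (hq : 0 < q) {f : ℝ → F}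
    (hf : Integrable f) : IntegrableOn (fun v => f (p * v - q / v)) (Ioi 0) := by
  have := (integrableOn_deriv_smul_comp_mul_sub_div_Ioi hp hq hf).bdd_smul p⁻¹
    (φ := fun v => (p + q / v ^ 2)⁻¹) (by fun_prop : Measurable _).aestronglyMeasurable <|
    ae_of_all _ fun v => by
      rw [norm_inv, Real.norm_of_nonneg (by positivity)]
      gcongr
      exact le_add_of_nonneg_right (by positivity)
  refine this.congr (ae_of_all _ fun v => ?_)
  exact inv_smul_smul₀ (by positivity) _

/-- With `φ v = p v - q / v`, the substitution `v ↦ (q / p) / v` maps `φ` to `-φ`; hence the two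
summands of `φ' = p + q / v²` contribute equally to `∫ f = ∫ f (φ v) φ' v`. -/
theorem integral_comp_mul_sub_div_Ioi (hp : 0 < p) (hq : 0 < q) {f : ℝ → F}
    (hf : Integrable f) (heven : Function.Even f) :
    ∫ v in Ioi 0, f (p * v - q / v) = (2 * p)⁻¹ • ∫ x, f x := by
  have hbij := bijOn_mul_sub_div_Ioi hp hq
  have habs : ∀ v : ℝ, |p + q / v ^ 2| = p + q / v ^ 2 := fun v => abs_of_nonneg (by positivity)
  have hint_comp := integrableOn_comp_mul_sub_div_Ioi hp hq hf
  have hint_div : IntegrableOn (fun v => (q / v ^ 2) • f (p * v - q / v)) (Ioi 0) := by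
    simpa only [add_smul, add_sub_cancel_left] using
      (integrableOn_deriv_smul_comp_mul_sub_div_Ioi hp hq hf).fun_sub (hint_comp.fun_smul p)
  have hswap : ∫ v in Ioi 0, (q / v ^ 2) • f (p * v - q / v) =
      p • ∫ v in Ioi 0, f (p * v - q / v) := by
    rw [← integral_inv_sq_smul_comp_div_Ioi (div_pos hq hp), ← integral_smul]
    refine setIntegral_congr_fun measurableSet_Ioi fun v hv => ?_
    have hv : v ≠ 0 := ne_of_gt hv
    rw [smul_smul, ← heven]
    congr 2 <;> field_simp
    ring
  have hsum : ∫ x, f x = (2 * p) • ∫ v in Ioi 0, f (p * v - q / v) := by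
    rw [← setIntegral_univ, ← hbij.image_eq, integral_image_eq_integral_abs_deriv_smul
      measurableSet_Ioi
      (fun v hv => hasDerivWithinAt_mul_sub_div (ne_of_gt hv) _) hbij.injOn]
    simp only [habs, add_smul]
    rw [integral_add (hint_comp.fun_smul p) hint_div, hswap, integral_smul, two_mul, add_smul]
  rw [hsum, inv_smul_smul₀ (by positivity)]

end CauchySchlomilch

theorem integral_exp_neg_sq_sub_sq_div_Ioi {p q : ℝ} (hp : 0 < p) (hq : 0 ≤ q) :
    ∫ v in Ioi 0, Real.exp (-(p * v) ^ 2 - (q / v) ^ 2) =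
      √π / (2 * p) * Real.exp (-(2 * p * q)) := by
  have hgauss : ∫ x, Real.exp (-x ^ 2) = √π := by simpa using integral_gaussian 1
  rcases hq.eq_or_lt with rfl | hq
  · have hbase := integral_gaussian_Ioi (p ^ 2)
    rw [Real.sqrt_div' _ (sq_nonneg p), Real.sqrt_sq hp.le] at hbase
    simpa [mul_pow, div_div, mul_comm p 2] using hbase
  · have hint : Integrable fun x : ℝ => Real.exp (-x ^ 2) := by
      simpa using integrable_exp_neg_mul_sq one_pos
    have hCS := integral_comp_mul_sub_div_Ioi hp hq hint fun x => by rw [neg_sq]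
    rw [hgauss, smul_eq_mul, inv_mul_eq_div] at hCS
    rw [← hCS, ← integral_mul_const]
    refine setIntegral_congr_fun measurableSet_Ioi fun v hv => ?_
    have hv : v ≠ 0 := ne_of_gt hv
    rw [← Real.exp_add]
    congr 1
    field_simp
    ring

theorem integral_rpow_mul_exp_neg_div_mul_exp_Ioi {p q : ℝ} (hp : 0 < p) (hq : 0 ≤ q) :
    ∫ u in Ioi 0, u ^ (-(3 / 2) : ℝ) * Real.exp (-p ^ 2 / u) * Real.exp (-u * q ^ 2) =
      √π / p * Real.exp (-(2 * p * q)) := by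
  have hsubst := integral_comp_rpow_Ioi
    (fun v : ℝ => Real.exp (-(p * v) ^ 2 - (q / v) ^ 2)) (p := -(1 / 2)) (by norm_num)
  rw [integral_exp_neg_sq_sub_sq_div_Ioi hp hq] at hsubst
  have hcongr : EqOn
      (fun u : ℝ => u ^ (-(3 / 2) : ℝ) * Real.exp (-p ^ 2 / u) * Real.exp (-u * q ^ 2))
      (fun u => 2 * ((|(-(1 / 2) : ℝ)| * u ^ (-(1 / 2) - 1 : ℝ)) •
        Real.exp (-(p * u ^ (-(1 / 2) : ℝ)) ^ 2 - (q / u ^ (-(1 / 2) : ℝ)) ^ 2))) (Ioi 0) := by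
    intro u hu
    have hsq : (u ^ (-(1 / 2) : ℝ)) ^ 2 = u⁻¹ := by
      rw [← Real.rpow_mul_natCast (le_of_lt hu), ← Real.rpow_neg_one]
      norm_num
    beta_reduce
    rw [mul_pow, div_pow, hsq, mul_assoc, ← Real.exp_add, abs_neg, abs_of_pos one_half_pos]
    norm_num
    ring_nf
  rw [setIntegral_congr_fun measurableSet_Ioi hcongr, integral_const_mul, hsubst]
  ring

section MixtureRepresentations

open Asymptotics

variable {E : Type*} [NormedAddCommGroup E] {p β : ℝ}

/-- The density in `u` (a Lévy density, up to normalization) of the Gaussian mixture that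
represents the exponential kernel `exp (-2 p ‖x - y‖)`. -/
noncomputable def levyWeight (p u : ℝ) : ℝ := u ^ (-(3 / 2) : ℝ) * Real.exp (-p ^ 2 / u)

/-- The density in `u` (a Gamma density, up to normalization) of the Gaussian mixture that
represents the inverse multiquadric kernel of parameter `β`. -/
noncomputable def gammaWeight (β u : ℝ) : ℝ := Real.exp (-u) * u ^ (β - 1)

theorem gaussianMixtureK_eq_ofReal (w : ℝ → ℝ) (S : Set ℝ) (x y : E) :
    gaussianMixtureK w S x y = ((∫ u in S, w u * Real.exp (-u * ‖x - y‖ ^ 2) : ℝ) : ℂ) := by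
  rw [← integral_complex_ofReal]
  simp only [gaussianMixtureK, gaussianK, Complex.ofReal_mul]

theorem gaussianMixtureK_levyWeight (hp : 0 < p) (x y : E) :
    gaussianMixtureK (levyWeight p) (Ioi 0) x y =
      ((√π / p : ℝ) : ℂ) * (Real.exp (-(2 * p * ‖x - y‖)) : ℝ) := by
  rw [gaussianMixtureK_eq_ofReal, ← Complex.ofReal_mul,
    ← integral_rpow_mul_exp_neg_div_mul_exp_Ioi hp (norm_nonneg _)]
  rfl

theorem gaussianMixtureK_gammaWeight (hβ : 0 < β) (x y : E) :
    gaussianMixtureK (gammaWeight β) (Ioi 0) x y =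
      (Gamma β : ℂ) * ((1 + ‖x - y‖ ^ 2) ^ (-β) : ℝ) := by
  have hpos : 0 < 1 + ‖x - y‖ ^ 2 := by positivity
  rw [gaussianMixtureK_eq_ofReal, ← Complex.ofReal_mul, Real.rpow_neg hpos.le,
    ← Real.inv_rpow hpos.le, ← one_div, mul_comm, ← integral_rpow_mul_exp_neg_mul_Ioi hβ hpos]
  refine congrArg _ (integral_congr_ae (ae_of_all _ fun u => ?_))
  simp only [gammaWeight]
  rw [mul_right_comm, ← Real.exp_add, mul_comm]
  ring_nf

theorem integrableOn_levyWeight (hp : 0 < p) : IntegrableOn (levyWeight p) (Ioi 0) := by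
  refine Integrable.of_integral_ne_zero ?_
  have := integral_rpow_mul_exp_neg_div_mul_exp_Ioi hp le_rfl
  norm_num at this
  simp only [levyWeight, this]
  positivity

theorem integrableOn_rpow_neg_mul_gammaWeight {D : ℝ} (hβ : D < β) :
    IntegrableOn (fun u => u ^ (-D) * gammaWeight β u) (Ioi 0) := by
  refine (GammaIntegral_convergent (sub_pos.2 hβ)).congr_fun (fun u hu => ?_) measurableSet_Ioi
  simp only [gammaWeight]
  rw [mul_left_comm, ← rpow_add hu]
  ring_nf

theorem gammaWeight_isBigO_levyWeight (β p : ℝ) : gammaWeight β =O[atTop] levyWeight p := by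
  have hexp : (fun u : ℝ => Real.exp (-u)) =O[atTop] fun u => u ^ (-(1 / 2) - β : ℝ) := by
    simpa using (isLittleO_exp_neg_mul_rpow_atTop one_pos (-(1 / 2) - β)).isBigO
  have hlim : Tendsto (fun u : ℝ => Real.exp (-p ^ 2 / u)) atTop (𝓝 1) := by
    simpa using (tendsto_const_nhds.div_atTop tendsto_id).rexp
  have hone : (fun _ => (1 : ℝ)) =O[atTop] fun u : ℝ => Real.exp (-p ^ 2 / u) :=
    (isBigO_const_left_iff_pos_le_norm one_ne_zero).2 ⟨1 / 2, by norm_num,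
      (hlim.norm.eventually (eventually_ge_nhds (by norm_num)))⟩
  calc gammaWeight β
      =O[atTop] fun u => u ^ (-(1 / 2) - β : ℝ) * u ^ (β - 1) := hexp.mul (isBigO_refl _ _)
    _ =ᶠ[atTop] fun u => u ^ (-(3 / 2) : ℝ) * 1 := by
      filter_upwards [eventually_gt_atTop 0] with u hu
      rw [← rpow_add hu]
      ring_nf
    _ =O[atTop] levyWeight p := (isBigO_refl _ _).mul hone

theorem kernelDominated_invMultiquadric_exp [InnerProductSpace ℝ E] [FiniteDimensional ℝ E]
    {σ : ℝ} (hσ : 0 < σ)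
    (hβ : Module.finrank ℝ E / 2 < β) :
    KernelDominated (fun x y : E => (((1 + ‖x - y‖ ^ 2) ^ (-β) : ℝ) : ℂ))
      fun x y => ((Real.exp (-‖x - y‖ / σ) : ℝ) : ℂ) := by
  have hβ0 : 0 < β := lt_of_le_of_lt (by positivity) hβ
  have hp : 0 < (2 * σ)⁻¹ := by positivity
  have hdom := kernelDominated_gaussianMixtureK (E := E) (m := gammaWeight β)
    (GammaIntegral_convergent hβ0) (integrableOn_levyWeight hp)
    (fun u hu => mul_nonneg (Real.exp_pos _).le (rpow_nonneg (le_of_lt hu) _))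
    (fun u hu => mul_pos (rpow_pos_of_pos hu _) (Real.exp_pos _))
    (integrableOn_rpow_neg_mul_gammaWeight hβ) (gammaWeight_isBigO_levyWeight β _)
  refine KernelDominated.of_const_mul (Gamma_pos_of_pos hβ0)
    (by positivity : 0 ≤ √π / (2 * σ)⁻¹) ?_
  convert hdom using 3 with x y x y
  · exact (gaussianMixtureK_gammaWeight hβ0 x y).symm
  · rw [gaussianMixtureK_levyWeight hp, neg_div]
    congr 4
    field_simp

end MixtureRepresentations

section Lattice

variable {ι : Type*} [Fintype ι]

theorem summable_prod_pi {κ : Type*} {f : ι → κ → ℝ} (hf0 : ∀ i k, 0 ≤ f i k)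
    (hf : ∀ i, Summable (f i)) : Summable fun m : ι → κ => ∏ i, f i (m i) := by
  classical
  refine summable_of_sum_le (c := ∏ i, ∑' k, f i k)
    (fun m => Finset.prod_nonneg fun i _ => hf0 i _) fun s => ?_
  have hsub : s ⊆ Fintype.piFinset fun i => s.image fun m => m i := fun m hm =>
    Fintype.mem_piFinset.2 fun i => Finset.mem_image_of_mem _ hm
  calc ∑ m ∈ s, ∏ i, f i (m i)
      ≤ ∑ m ∈ Fintype.piFinset fun i => s.image fun m => m i, ∏ i, f i (m i) :=
        Finset.sum_le_sum_of_subset_of_nonneg hsub fun m _ _ =>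
          Finset.prod_nonneg fun i _ => hf0 i _
    _ = ∏ i, ∑ k ∈ s.image fun m => m i, f i k := (Finset.prod_univ_sum _ _).symm
    _ ≤ ∏ i, ∑' k, f i k := Finset.prod_le_prod
        (fun i _ => Finset.sum_nonneg fun k _ => hf0 i k)
        fun i _ => (hf i).sum_le_tsum _ fun k _ => hf0 i k

theorem summable_exp_neg_mul_abs_int {c : ℝ} (hc : 0 < c) :
    Summable fun n : ℤ => Real.exp (-c * |(n : ℝ)|) := by
  have hnat : Summable fun n : ℕ => Real.exp (-c * n) := by
    simpa only [mul_comm] using Real.summable_exp_nat_mul_iff.2 (neg_neg_of_pos hc)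
  exact .of_nat_of_neg (by simpa using hnat) (by simpa using hnat)

theorem summable_exp_neg_mul_sqrt_sum_sq {c : ℝ} (hc : 0 < c) :
    Summable fun m : ι → ℤ => Real.exp (-c * √(∑ i, (m i : ℝ) ^ 2)) := by
  set a : ℝ := c / (Fintype.card ι + 1) with ha
  have ha0 : 0 < a := by positivity
  refine .of_nonneg_of_le (fun m => (Real.exp_pos _).le) (fun m => ?_)
    (summable_prod_pi (fun (_ : ι) (n : ℤ) => (Real.exp_pos (-a * |(n : ℝ)|)).le)
      fun _ => summable_exp_neg_mul_abs_int ha0)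
  have hcoord : ∀ i, |(m i : ℝ)| ≤ √(∑ i, (m i : ℝ) ^ 2) := fun i =>
    Real.abs_le_sqrt (Finset.single_le_sum (f := fun i => (m i : ℝ) ^ 2)
      (fun _ _ => sq_nonneg _) (Finset.mem_univ i))
  have hsum : ∑ i, |(m i : ℝ)| ≤ (Fintype.card ι + 1) * √(∑ i, (m i : ℝ) ^ 2) := by
    have := Finset.sum_le_card_nsmul Finset.univ _ _ fun i _ => hcoord i
    rw [Finset.card_univ, nsmul_eq_mul] at this
    linarith [Real.sqrt_nonneg (∑ i, (m i : ℝ) ^ 2)]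
  rw [← Real.exp_sum, ← Finset.mul_sum, Real.exp_le_exp, neg_mul, neg_mul, neg_le_neg_iff]
  calc a * ∑ i, |(m i : ℝ)| ≤ a * ((Fintype.card ι + 1) * √(∑ i, (m i : ℝ) ^ 2)) := by gcongr
    _ = c * √(∑ i, (m i : ℝ) ^ 2) := by rw [ha]; field_simp

/-- Among the pairs in `B × B`, each of the `#A` first entries `m ∈ A` sees every difference in
`A`, and each of the `#B` first entries sees each difference at most once. -/
theorem IsPSDKernel.card_mul_sum_le {Γ : Type*} [AddCommGroup Γ] {f g : Γ → ℝ} (hf : 0 ≤ f)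
    (hg : Summable g) (h : IsPSDKernel fun m n => ((g (m - n) - f (m - n) : ℝ) : ℂ))
    {A B : Finset Γ} (hAB : A ⊆ B) (hsub : ∀ m ∈ A, ∀ n ∈ A, m - n ∈ B) :
    #A * ∑ k ∈ A, f k ≤ #B * ∑' k, |g k| := by
  classical
  have hpsd := h.sum_nonneg B
  norm_cast at hpsd
  simp only [Finset.sum_sub_distrib, sub_nonneg] at hpsd
  have hlower : ∀ m ∈ A, ∑ k ∈ A, f k ≤ ∑ n ∈ B, f (m - n) := fun m hm => by
    have hinj : Set.InjOn (fun k => m - k) A := sub_right_injective.injOn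
    calc ∑ k ∈ A, f k = ∑ n ∈ A.image fun k => m - k, f (m - n) := by
          simp only [Finset.sum_image hinj, sub_sub_cancel]
      _ ≤ ∑ n ∈ B, f (m - n) := Finset.sum_le_sum_of_subset_of_nonneg
          (Finset.image_subset_iff.2 fun n hn => hsub m hm n hn) fun n _ _ => hf _
  have hupper : ∀ m ∈ B, ∑ n ∈ B, g (m - n) ≤ ∑' k, |g k| := fun m _ => by
    have hsummable : Summable fun n => |g (m - n)| := (Equiv.subLeft m).summable_iff.2 hg.abs
    calc ∑ n ∈ B, g (m - n) ≤ ∑ n ∈ B, |g (m - n)| := Finset.sum_le_sum fun n _ => le_abs_self _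
      _ ≤ ∑' n, |g (m - n)| := hsummable.sum_le_tsum _ fun n _ => abs_nonneg _
      _ = ∑' k, |g k| := (Equiv.subLeft m).tsum_eq fun k => |g k|
  calc #A * ∑ k ∈ A, f k ≤ ∑ m ∈ A, ∑ n ∈ B, f (m - n) := by
        simpa only [nsmul_eq_mul] using Finset.card_nsmul_le_sum A _ _ hlower
    _ ≤ ∑ m ∈ B, ∑ n ∈ B, f (m - n) := Finset.sum_le_sum_of_subset_of_nonneg hAB
        fun m _ _ => Finset.sum_nonneg fun n _ => hf _
    _ ≤ ∑ m ∈ B, ∑ n ∈ B, g (m - n) := hpsd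
    _ ≤ #B * ∑' k, |g k| := by
        simpa only [nsmul_eq_mul] using Finset.sum_le_card_nsmul B _ _ hupper

theorem exists_forall_abs_le {ι : Type*} [Finite ι] (s : Finset (ι → ℤ)) :
    ∃ N : ℕ, ∀ m ∈ s, ∀ i, |m i| ≤ N := by
  have := Fintype.ofFinite ι
  refine ⟨s.sup fun m => Finset.univ.sup fun i => (m i).natAbs, fun m hm i => ?_⟩
  have hcoord : (m i).natAbs ≤ Finset.univ.sup fun i => (m i).natAbs :=
    Finset.le_sup (f := fun i => (m i).natAbs) (Finset.mem_univ i)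
  have hbox : (Finset.univ.sup fun i => (m i).natAbs) ≤
      s.sup fun m => Finset.univ.sup fun i => (m i).natAbs :=
    Finset.le_sup (f := fun m : ι → ℤ => Finset.univ.sup fun i => (m i).natAbs) hm
  rw [Int.abs_eq_natAbs]
  exact_mod_cast hcoord.trans hbox

theorem card_piFinset_Icc [DecidableEq ι] (a b : ℤ) :
    #(Fintype.piFinset fun _ : ι => Finset.Icc a b) = (b + 1 - a).toNat ^ Fintype.card ι := by
  simp only [Fintype.card_piFinset, Int.card_Icc, Finset.prod_const, Finset.card_univ]

theorem IsPSDKernel.summable_of_sub {ι : Type*} [Finite ι] {f g : (ι → ℤ) → ℝ} (hf : 0 ≤ f)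
    (hg : Summable g) (h : IsPSDKernel fun m n => ((g (m - n) - f (m - n) : ℝ) : ℂ)) :
    Summable f := by
  classical
  have := Fintype.ofFinite ι
  let box (N : ℕ) : Finset (ι → ℤ) := Fintype.piFinset fun _ => Finset.Icc (-N : ℤ) N
  refine summable_of_sum_le (c := 2 ^ Fintype.card ι * ∑' k, |g k|) hf fun s => ?_
  obtain ⟨N, hN⟩ := exists_forall_abs_le s
  have hs : s ⊆ box N := fun m hm => Fintype.mem_piFinset.2 fun i =>
    Finset.mem_Icc.2 (abs_le.1 (hN m hm i))
  have hbox : #(box N) * ∑ k ∈ box N, f k ≤ #(box (2 * N)) * ∑' k, |g k| := by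
    refine h.card_mul_sum_le hf hg (fun m hm => ?_) fun m hm n hn => ?_
    all_goals
      simp only [box, Fintype.mem_piFinset, Finset.mem_Icc, Pi.sub_apply] at *
      grind
  have hdoubling : #(box (2 * N)) ≤ 2 ^ Fintype.card ι * #(box N) := by
    rw [card_piFinset_Icc, card_piFinset_Icc, ← mul_pow]
    gcongr
    lia
  have hcard : 0 < #(box N) := Finset.card_pos.2
    ⟨0, Fintype.mem_piFinset.2 fun _ => Finset.mem_Icc.2 (by simp)⟩
  refine (Finset.sum_le_sum_of_subset_of_nonneg hs fun k _ _ => hf k).trans ?_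
  refine le_of_mul_le_mul_left (hbox.trans ?_) (Nat.cast_pos.2 hcard)
  calc (#(box (2 * N)) : ℝ) * ∑' k, |g k| ≤
        2 ^ Fintype.card ι * #(box N) * ∑' k, |g k| := by
        gcongr
        exact_mod_cast hdoubling
    _ = #(box N) * (2 ^ Fintype.card ι * ∑' k, |g k|) := by ring

theorem le_one_add_sum_sq_rpow_of_abs_le {β : ℝ} (hβ : β ≤ (Fintype.card ι : ℝ) / 2) {N : ℕ}
    (hN : 0 < N) {m : ι → ℤ} (hm : ∀ i, |m i| ≤ N) :
    (1 + Fintype.card ι : ℝ) ^ (-(Fintype.card ι / 2 : ℝ)) / (N : ℝ) ^ Fintype.card ι ≤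
      (1 + ∑ i, (m i : ℝ) ^ 2) ^ (-β) := by
  set d := (Fintype.card ι : ℝ) with hd
  have hN1 : (1 : ℝ) ≤ N := Nat.one_le_cast.2 hN
  have hsq : 1 + ∑ i, (m i : ℝ) ^ 2 ≤ (1 + d) * N ^ 2 := by
    have := Finset.sum_le_card_nsmul Finset.univ (fun i => (m i : ℝ) ^ 2) (N ^ 2) fun i _ =>
      sq_le_sq' (by exact_mod_cast (abs_le.1 (hm i)).1) (by exact_mod_cast (abs_le.1 (hm i)).2)
    rw [Finset.card_univ, nsmul_eq_mul] at this
    nlinarith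
  calc (1 + d) ^ (-(d / 2)) / (N : ℝ) ^ Fintype.card ι
      = ((1 + d) * (N : ℝ) ^ 2) ^ (-(d / 2)) := by
        rw [mul_rpow (by positivity) (by positivity), ← rpow_natCast_mul (by positivity),
          ← rpow_natCast, ← hd, div_eq_mul_inv, ← rpow_neg (by positivity)]
        congr 2
        push_cast
        ring
    _ ≤ (1 + ∑ i, (m i : ℝ) ^ 2) ^ (-(d / 2)) :=
        rpow_le_rpow_of_nonpos (by positivity) hsq (neg_nonpos.2 (by positivity))
    _ ≤ (1 + ∑ i, (m i : ℝ) ^ 2) ^ (-β) :=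
        rpow_le_rpow_of_exponent_le (le_add_of_nonneg_right (by positivity)) (neg_le_neg hβ)

/-- The box `[N + 1, 2N]^ι` has `N ^ card ι` points, at each of which the summand is at least of
order `N ^ (-card ι)`. -/
theorem not_summable_one_add_sum_sq_rpow [Nonempty ι] {β : ℝ}
    (hβ : β ≤ (Fintype.card ι : ℝ) / 2) :
    ¬ Summable fun m : ι → ℤ => (1 + ∑ i, (m i : ℝ) ^ 2) ^ (-β) := by
  classical
  intro hsum
  set δ := (1 + Fintype.card ι : ℝ) ^ (-(Fintype.card ι / 2 : ℝ))
  have hδ : 0 < δ := by positivity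
  obtain ⟨s, hs⟩ := summable_iff_vanishing_norm.1 hsum (δ / 2 ^ Fintype.card ι) (by positivity)
  obtain ⟨M, hM⟩ := exists_forall_abs_le s
  obtain ⟨N, hMN, hN⟩ : ∃ N : ℕ, M ≤ N ∧ 0 < N := ⟨M + 1, M.le_succ, M.succ_pos⟩
  set box : Finset (ι → ℤ) := Fintype.piFinset fun _ => Finset.Icc (N + 1 : ℤ) (2 * N) with hbox
  have hmem : ∀ {m}, m ∈ box ↔ ∀ i, (N + 1 : ℤ) ≤ m i ∧ m i ≤ 2 * N := by
    simp only [hbox, Fintype.mem_piFinset, Finset.mem_Icc, implies_true]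
  have hdisj : Disjoint box s := Finset.disjoint_left.2 fun m hm hms => by
    obtain ⟨i⟩ := ‹Nonempty ι›
    have := (abs_le.1 (hM m hms i)).2
    have := (hmem.1 hm i).1
    lia
  have hcard : #box = N ^ Fintype.card ι := by
    rw [hbox, card_piFinset_Icc]
    congr
    lia
  have hterm : ∀ m ∈ box, δ / (2 * N : ℕ) ^ Fintype.card ι ≤
      (1 + ∑ i, (m i : ℝ) ^ 2) ^ (-β) := fun m hm =>
    le_one_add_sum_sq_rpow_of_abs_le hβ (Nat.mul_pos two_pos hN) fun i => by
      have := hmem.1 hm i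
      rw [abs_le]
      lia
  have hlower : δ / 2 ^ Fintype.card ι ≤ ∑ m ∈ box, (1 + ∑ i, (m i : ℝ) ^ 2) ^ (-β) := by
    calc δ / 2 ^ Fintype.card ι = #box * (δ / (2 * N : ℕ) ^ Fintype.card ι) := by
          rw [hcard]
          push_cast
          rw [mul_pow]
          field_simp
      _ ≤ _ := by simpa only [nsmul_eq_mul] using Finset.card_nsmul_le_sum box _ _ hterm
  exact (hlower.trans (le_abs_self _)).not_gt (hs box hdisj)

end Lattice

theorem exists_lattice_embedding (E : Type*) [NormedAddCommGroup E] [InnerProductSpace ℝ E]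
    [FiniteDimensional ℝ E] : ∃ x : (Fin (Module.finrank ℝ E) → ℤ) →+ E,
      ∀ m, ‖x m‖ = √(∑ i, (m i : ℝ) ^ 2) := by
  let b := stdOrthonormalBasis ℝ E
  refine ⟨AddMonoidHom.mk' (fun m => b.repr.symm (WithLp.toLp 2 fun i => (m i : ℝ)))
    fun m n => ?_, fun m => ?_⟩
  · rw [← map_add, ← WithLp.toLp_add]
    congr 2
    ext i
    exact Int.cast_add _ _
  · simp only [AddMonoidHom.mk'_apply, LinearIsometryEquiv.norm_map, EuclideanSpace.norm_eq,
      Real.norm_eq_abs, sq_abs]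

theorem finrank_div_two_lt_of_kernelDominated {E : Type*} [NormedAddCommGroup E]
    [InnerProductSpace ℝ E] [FiniteDimensional ℝ E] [Nontrivial E] {σ β : ℝ} (hσ : 0 < σ)
    (h : KernelDominated (fun x y : E => (((1 + ‖x - y‖ ^ 2) ^ (-β) : ℝ) : ℂ))
      fun x y => ((Real.exp (-‖x - y‖ / σ) : ℝ) : ℂ)) : Module.finrank ℝ E / 2 < β := by
  by_contra! hβ
  obtain ⟨lam, -, h⟩ := h
  obtain ⟨x, hx⟩ := exists_lattice_embedding E
  have : Nonempty (Fin (Module.finrank ℝ E)) := ⟨⟨0, Module.finrank_pos⟩⟩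
  refine not_summable_one_add_sum_sq_rpow (ι := Fin (Module.finrank ℝ E)) (β := β)
    (by rwa [Fintype.card_fin]) ?_
  refine IsPSDKernel.summable_of_sub (fun m => by positivity)
    ((summable_exp_neg_mul_sqrt_sum_sq (inv_pos.2 hσ)).mul_left lam) ?_
  convert h.comp x using 3 with m n
  beta_reduce
  rw [← map_sub, hx, sq_sqrt (by positivity), neg_div, div_eq_inv_mul, ← neg_mul]
  push_cast
  rfl

theorem invMultiquadric_l2exp_inclusion_general {E : Type*} [NormedAddCommGroup E]
    [InnerProductSpace ℝ E] [FiniteDimensional ℝ E] [Nontrivial E] {σ : ℝ} (hσ : 0 < σ) (β : ℝ) :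
    (¬ KernelDominated (fun x y : E => ((Real.exp (-‖x - y‖ / σ) : ℝ) : ℂ))
      fun x y => (((1 + ‖x - y‖ ^ 2) ^ (-β) : ℝ) : ℂ)) ∧
    (KernelDominated (fun x y : E => (((1 + ‖x - y‖ ^ 2) ^ (-β) : ℝ) : ℂ))
      (fun x y => ((Real.exp (-‖x - y‖ / σ) : ℝ) : ℂ)) ↔ Module.finrank ℝ E / 2 < β) :=
  ⟨not_kernelDominated_exp_invMultiquadric hσ β,
    finrank_div_two_lt_of_kernelDominated hσ, kernelDominated_invMultiquadric_exp hσ⟩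

/-- (a) No `λ ≥ 0` makes `λM_β − ℰ_σ` positive semidefinite; (b) some `λ ≥ 0`
makes `λℰ_σ − M_β` positive semidefinite iff `β > d/2`. -/
theorem invMultiquadric_l2exp_inclusion (d : ℕ) (hd : 0 < d)
    (σ β : ℝ) (hσ : 0 < σ) (hβ : 0 < β) :
    (¬ ∃ lam : ℝ, 0 ≤ lam ∧
        IsPSDKernel (fun x y : EuclideanSpace ℝ (Fin d) =>
          (lam : ℂ) * invMultiquadricK d β x y - l2expK d σ x y)) ∧
    ((∃ lam : ℝ, 0 ≤ lam ∧
        IsPSDKernel (fun x y : EuclideanSpace ℝ (Fin d) =>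
          (lam : ℂ) * l2expK d σ x y - invMultiquadricK d β x y)) ↔ (d : ℝ) / 2 < β) := by
  have : Nonempty (Fin d) := ⟨⟨0, hd⟩⟩
  simpa only [KernelDominated, invMultiquadricK, l2expK, finrank_euclideanSpace_fin] using
    invMultiquadric_l2exp_inclusion_general (E := EuclideanSpace ℝ (Fin d)) hσ β
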